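/- Let φ be a Schwartz function on ℝ^d. Then for every t ≥ 0 the Cole–Hopf transform V_t φ = -α ln(P_t e^{-φ/α}) is a Schwartz function, and the maps t ↦ V_t φ, t ↦ ∂_t V_t φ, t ↦ Δ V_t φ, and t ↦ |∇ V_t φ|² are all continuous from [0,∞) to the Schwartz space S. -/

import Mathlib

open MeasureTheory Real Filter Set

noncomputable section

/-- Euclidean space `ℝ^d`. -/
abbrev Euc (d : ℕ) := EuclideanSpace ℝ (Fin d)

/-- The heat semigroup `P_t` with generator `(α/2)Δ`: for `t > 0` it is given by
convolution with the Gaussian kernel of variance `αt`, and `P_0 f = f`. -/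
def heatP (d : ℕ) (α t : ℝ) (f : Euc d → ℝ) (x : Euc d) : ℝ :=
  if t = 0 then f x
  else ∫ y : Euc d, (2 * π * α * t) ^ (-(d : ℝ) / 2) *
    Real.exp (-‖x - y‖ ^ 2 / (2 * α * t)) * f y

/-- The Laplacian of `f : ℝ^d → ℝ`, as the sum of the second partial derivatives in the
coordinate directions. -/
def lap (d : ℕ) (f : Euc d → ℝ) (x : Euc d) : ℝ :=
  ∑ i : Fin d, fderiv ℝ (fun y => fderiv ℝ f y (EuclideanSpace.single i 1)) x
    (EuclideanSpace.single i 1)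

/-- The Cole–Hopf transform `V_t φ = -α ln (P_t e^{-φ/α})`. -/
def coleHopf (d : ℕ) (α t : ℝ) (φ : Euc d → ℝ) (x : Euc d) : ℝ :=
  -α * Real.log (heatP d α t (fun y => Real.exp (-φ y / α)) x)

/-- A tempered measure: a locally finite Borel measure integrating every Schwartz function. -/
def IsTempered {d : ℕ} (μ : Measure (Euc d)) : Prop :=
  IsLocallyFiniteMeasure μ ∧ ∀ φ : SchwartzMap (Euc d) ℝ, Integrable (fun x => φ x) μ

/-- The Gaussian measure on `ℝ^d` with mean `m` and covariance `t • Id`, defined through its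
density with respect to Lebesgue measure. -/
def gaussE (d : ℕ) (m : Euc d) (t : ℝ) : Measure (Euc d) :=
  volume.withDensity fun x =>
    ENNReal.ofReal ((2 * π * t) ^ (-(d : ℝ) / 2) * Real.exp (-‖x - m‖ ^ 2 / (2 * t)))

/-- The unit cube `[0,1]^d`. -/
def unitCube (d : ℕ) : Set (Euc d) := {x | ∀ i, x i ∈ Set.Icc (0 : ℝ) 1}

/-- First-order partial derivative in direction `i`. -/
def pderivI {d : ℕ} (i : Fin d) (f : Euc d → ℝ) (x : Euc d) : ℝ :=
  fderiv ℝ f x (EuclideanSpace.single i 1)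

/-- Iterated partial derivative in direction `i`. -/
def pderivIter {d : ℕ} (i : Fin d) : ℕ → (Euc d → ℝ) → Euc d → ℝ
  | 0, f => f
  | n + 1, f => pderivI i (pderivIter i n f)

/-- The partial derivative `D^β` for a multi-index `β`. -/
def Dmulti {d : ℕ} (β : Fin d → ℕ) (f : Euc d → ℝ) : Euc d → ℝ :=
  (List.finRange d).foldr (fun i g => pderivIter i (β i) g) f

/-! Write `V_t φ = -α log (1 + u_t)`, where `u_t = P_t (exp (-φ / α) - 1)`. Unlike `exp (-φ / α)`,
the initial value `u_0` is a Schwartz function, so everything can be done inside Schwartz space.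

* If `G` is smooth, `f ↦ G ∘ f - G 0` is continuous on Schwartz space: for the zeroth order
  seminorms this is the Lipschitz bound for `G` on balls, and `D (G ∘ f)` is again a smooth function
  of the Schwartz function `(f, Df)`, so that induction on the order applies.
* The heat semigroup is `P_t g (x) = 𝔼 g (x - √(αt) Z)` with `Z` a standard Gaussian vector. Such
  averages commute with derivatives, and the moments of `Z` make them Lipschitz in `√(αt)`, locally
  uniformly, in every Schwartz seminorm. Gaussian integration by parts (Stein's identity) turns the
  derivative in `√(αt)` into the heat equation.
* Since `1 + u_t` stays above a positive constant, the logarithm may be replaced by a smooth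
  function on the whole line. The chain rule then gives `∂_t V = (α / 2) Δ V - |∇ V|² / 2`, whose
  right-hand side is a continuous function of `V` in Schwartz space.
-/

open scoped SchwartzMap ContDiff Topology LineDeriv Laplacian

section Continuity

variable {X E F : Type*} [TopologicalSpace X] [NormedAddCommGroup E] [NormedSpace ℝ E]
  [NormedAddCommGroup F] [NormedSpace ℝ F]

lemma continuousAt_schwartzMap_of_le {u : X → 𝓢(E, F)} {x₀ : X}
    (h : ∀ k n : ℕ, ∃ b : X → ℝ, Tendsto b (𝓝 x₀) (𝓝 0) ∧ ∀ᶠ x in 𝓝 x₀, ∀ y,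
      ‖y‖ ^ k * ‖iteratedFDeriv ℝ n (fun z => u x z - u x₀ z) y‖ ≤ b x) :
    ContinuousAt u x₀ := by
  refine ((schwartz_withSeminorms ℝ E F).tendsto_nhds u (u x₀)).2 fun ⟨k, n⟩ ε hε => ?_
  obtain ⟨b, hb, hle⟩ := h k n
  filter_upwards [hle, hb.eventually_lt_const hε] with x hx hbε
  have hb₀ : 0 ≤ b x := (by positivity : (0 : ℝ) ≤ _).trans (hx 0)
  exact (SchwartzMap.seminorm_le_bound ℝ k n (u x - u x₀) hb₀ hx).trans_lt hbε

end Continuity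

section SmoothComp

/-- The first-order jet `x ↦ (f x, Df x)` of a Schwartz function, as a continuous linear map
between Schwartz spaces. -/
def schwartzJet (E F : Type*) [NormedAddCommGroup E] [NormedSpace ℝ E] [NormedAddCommGroup F]
    [NormedSpace ℝ F] : 𝓢(E, F) →L[ℝ] 𝓢(E, F × (E →L[ℝ] F)) :=
  SchwartzMap.postcompCLM (.inl ℝ F (E →L[ℝ] F)) +
    SchwartzMap.postcompCLM (.inr ℝ F (E →L[ℝ] F)) ∘L SchwartzMap.fderivCLM ℝ E F

lemma schwartzJet_apply {E F : Type*} [NormedAddCommGroup E] [NormedSpace ℝ E]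
    [NormedAddCommGroup F] [NormedSpace ℝ F] (f : 𝓢(E, F)) (x : E) :
    schwartzJet E F f x = (f x, fderiv ℝ f x) := by
  simp [schwartzJet]

lemma exists_seminorm_norm_comp_sub_comp_le {E F H : Type*} [NormedAddCommGroup E]
    [NormedSpace ℝ E] [NormedAddCommGroup F] [NormedSpace ℝ F] [FiniteDimensional ℝ F]
    [NormedAddCommGroup H] [NormedSpace ℝ H] {G : F → H} (hG : ContDiff ℝ 1 G) (k : ℕ) :
    ∃ q : Seminorm ℝ 𝓢(E, F), Continuous q ∧ ∀ R, ∃ C, ∀ f g : 𝓢(E, F), q f ≤ R → q g ≤ R →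
      ∀ x, ‖x‖ ^ k * ‖G (f x) - G (g x)‖ ≤ C * q (f - g) := by
  let q : Seminorm ℝ 𝓢(E, F) := SchwartzMap.seminorm ℝ 0 0 + SchwartzMap.seminorm ℝ k 0
  have hcont (m : ℕ × ℕ) := (schwartz_withSeminorms ℝ E F).continuous_seminorm m
  refine ⟨q, (hcont (0, 0)).add (hcont (k, 0)), fun R => ?_⟩
  have := FiniteDimensional.proper ℝ F
  obtain ⟨L, hL⟩ := (hG.locallyLipschitz.locallyLipschitzOn
    (s := Metric.closedBall 0 R)).exists_lipschitzOnWith_of_compact (isCompact_closedBall 0 R)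
  have mem_ball {f : 𝓢(E, F)} (hf : q f ≤ R) (x : E) : f x ∈ Metric.closedBall 0 R :=
    mem_closedBall_zero_iff.2 <| (SchwartzMap.norm_le_seminorm ℝ f x).trans <|
      (le_add_of_nonneg_right (apply_nonneg _ f)).trans hf
  refine ⟨L, fun f g hf hg x => ?_⟩
  calc ‖x‖ ^ k * ‖G (f x) - G (g x)‖
      ≤ ‖x‖ ^ k * (L * ‖f x - g x‖) := by
        gcongr
        exact hL.norm_sub_le (mem_ball hf x) (mem_ball hg x)
    _ = L * (‖x‖ ^ k * ‖(f - g) x‖) := by rw [sub_apply]; ring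
    _ ≤ L * SchwartzMap.seminorm ℝ k 0 (f - g) := by
        gcongr
        exact SchwartzMap.norm_pow_mul_le_seminorm ℝ (f - g) k x
    _ ≤ L * q (f - g) := by
        gcongr
        exact le_add_of_nonneg_left (apply_nonneg _ (f - g))

universe u

variable {E : Type u} [NormedAddCommGroup E] [NormedSpace ℝ E] [FiniteDimensional ℝ E]

lemma exists_seminorm_iteratedFDeriv_comp_sub_comp_le (k n : ℕ) :
    ∀ {F H : Type u} [NormedAddCommGroup F] [NormedSpace ℝ F] [FiniteDimensional ℝ F]
      [NormedAddCommGroup H] [NormedSpace ℝ H] {G : F → H}, ContDiff ℝ ∞ G →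
    ∃ q : Seminorm ℝ 𝓢(E, F), Continuous q ∧ ∀ R, ∃ C, ∀ f g : 𝓢(E, F), q f ≤ R → q g ≤ R →
      ∀ x, ‖x‖ ^ k * ‖iteratedFDeriv ℝ n (fun y => G (f y) - G (g y)) x‖ ≤ C * q (f - g) := by
  induction n with
  | zero =>
    intro F H _ _ _ _ _ G hG
    simpa only [norm_iteratedFDeriv_zero] using
      exists_seminorm_norm_comp_sub_comp_le (hG.of_le (by simp)) k
  | succ n ih =>
    intro F H _ _ _ _ _ G hG
    -- `D (G ∘ f)` is again a smooth function of a Schwartz function, namely of the jet of `f`.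
    let G' : F × (E →L[ℝ] F) → E →L[ℝ] H := fun p => (fderiv ℝ G p.1).comp p.2
    have hG' : ContDiff ℝ ∞ G' :=
      ((hG.fderiv_right (m := ∞) (by simp)).comp contDiff_fst).clm_comp contDiff_snd
    have hasFDerivAt_comp (f : 𝓢(E, F)) (y : E) :
        HasFDerivAt (fun y => G (f y)) (G' (schwartzJet E F f y)) y := by
      rw [schwartzJet_apply]
      exact ((hG.differentiable (by simp)).differentiableAt.hasFDerivAt).comp y
        f.differentiableAt.hasFDerivAt
    obtain ⟨q, hq, hbound⟩ := ih hG'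
    refine ⟨q.comp (schwartzJet E F).toLinearMap, hq.comp (schwartzJet E F).continuous,
      fun R => (hbound R).imp fun C hC f g hf hg x => ?_⟩
    have hfderiv : fderiv ℝ (fun y => G (f y) - G (g y)) =
        fun y => G' (schwartzJet E F f y) - G' (schwartzJet E F g y) :=
      funext fun y => ((hasFDerivAt_comp f y).sub (hasFDerivAt_comp g y)).fderiv
    rw [← norm_iteratedFDeriv_fderiv, hfderiv]
    simpa using hC (schwartzJet E F f) (schwartzJet E F g) hf hg x

variable {F H : Type u} [NormedAddCommGroup F] [NormedSpace ℝ F] [FiniteDimensional ℝ F]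
  [NormedAddCommGroup H] [NormedSpace ℝ H]

/-- Composition of a Schwartz function with a smooth function `G`, normalised by subtracting the
limit `G 0` at infinity so that the result is again a Schwartz function. -/
def smoothComp {G : F → H} (hG : ContDiff ℝ ∞ G) (f : 𝓢(E, F)) : 𝓢(E, H) where
  toFun x := G (f x) - G 0
  smooth' := (hG.comp (f.smooth ⊤)).sub contDiff_const
  decay' k n := by
    obtain ⟨q, -, hq⟩ := exists_seminorm_iteratedFDeriv_comp_sub_comp_le (E := E) k n hG
    obtain ⟨C, hC⟩ := hq (q f)
    exact ⟨C * q (f - 0), hC f 0 le_rfl (by simp)⟩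

lemma smoothComp_apply {G : F → H} (hG : ContDiff ℝ ∞ G) (f : 𝓢(E, F)) (x : E) :
    smoothComp hG f x = G (f x) - G 0 := rfl

lemma continuous_smoothComp {G : F → H} (hG : ContDiff ℝ ∞ G) :
    Continuous (smoothComp (E := E) hG) := by
  refine continuous_iff_continuousAt.2 fun f₀ => continuousAt_schwartzMap_of_le fun k n => ?_
  obtain ⟨q, hqc, hq⟩ := exists_seminorm_iteratedFDeriv_comp_sub_comp_le (E := E) k n hG
  obtain ⟨C, hC⟩ := hq (q f₀ + 1)
  refine ⟨fun f => C * q (f - f₀), ?_, ?_⟩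
  · simpa using (by fun_prop : Continuous fun f => C * q (f - f₀)).tendsto f₀
  · filter_upwards [hqc.continuousAt.eventually_lt_const (lt_add_one (q f₀))] with f hf x
    simpa only [smoothComp_apply, sub_sub_sub_cancel_right] using hC f f₀ hf.le (by simp) x

end SmoothComp

section Translation

variable {E F : Type*} [NormedAddCommGroup E] [NormedSpace ℝ E] [NormedAddCommGroup F]
  [NormedSpace ℝ F]

lemma norm_pow_mul_norm_schwartz_sub_le (g : 𝓢(E, F)) (k : ℕ) (x h : E) :
    ‖x‖ ^ k * ‖g (x - h)‖ ≤
      2 ^ (k - 1) * (SchwartzMap.seminorm ℝ k 0 g + ‖h‖ ^ k * SchwartzMap.seminorm ℝ 0 0 g) := by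
  have hx : ‖x‖ ^ k ≤ 2 ^ (k - 1) * (‖x - h‖ ^ k + ‖h‖ ^ k) := by
    refine (pow_le_pow_left₀ (norm_nonneg x) ?_ k).trans
      (add_pow_le (norm_nonneg (x - h)) (norm_nonneg h) k)
    simpa using norm_add_le (x - h) h
  calc ‖x‖ ^ k * ‖g (x - h)‖
      ≤ 2 ^ (k - 1) * (‖x - h‖ ^ k + ‖h‖ ^ k) * ‖g (x - h)‖ := by gcongr
    _ = 2 ^ (k - 1) * (‖x - h‖ ^ k * ‖g (x - h)‖ + ‖h‖ ^ k * ‖g (x - h)‖) := by ring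
    _ ≤ _ := by
      gcongr
      · exact SchwartzMap.norm_pow_mul_le_seminorm ℝ g k (x - h)
      · exact SchwartzMap.norm_le_seminorm ℝ g (x - h)

lemma hasDerivAt_schwartz_sub_smul (g : 𝓢(E, F)) (x z : E) (a : ℝ) :
    HasDerivAt (fun a : ℝ => g (x - a • z)) (fderiv ℝ g (x - a • z) (-z)) a := by
  have h : HasDerivAt (fun a : ℝ => x - a • z) (-z) a := by
    simpa using ((hasDerivAt_id a).smul_const z).const_sub x
  exact (g.hasFDerivAt (x - a • z)).comp_hasDerivAt a h

lemma exists_norm_schwartz_sub_smul_sub_le (g : 𝓢(E, F)) (A : ℝ) (k : ℕ) :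
    ∃ C₁ C₂, ∀ a ∈ Metric.closedBall 0 A, ∀ b ∈ Metric.closedBall 0 A, ∀ x z,
      ‖x‖ ^ k * ‖g (x - a • z) - g (x - b • z)‖ ≤
        (C₁ * ‖z‖ + C₂ * ‖z‖ ^ (k + 1)) * |a - b| := by
  let g' := SchwartzMap.fderivCLM ℝ E F g
  let S (k : ℕ) := SchwartzMap.seminorm ℝ k 0 g'
  refine ⟨2 ^ (k - 1) * S k, 2 ^ (k - 1) * (A ^ k * S 0), fun a ha b hb x z => ?_⟩
  have norm_deriv_le (c : ℝ) (hc : c ∈ Metric.closedBall 0 A) :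
      ‖‖x‖ ^ k • g' (x - c • z) (-z)‖ ≤
        2 ^ (k - 1) * S k * ‖z‖ + 2 ^ (k - 1) * (A ^ k * S 0) * ‖z‖ ^ (k + 1) := by
    have hcz : ‖c • z‖ ≤ A * ‖z‖ := by
      rw [norm_smul]
      gcongr
      exact mem_closedBall_zero_iff.1 hc
    calc ‖‖x‖ ^ k • g' (x - c • z) (-z)‖
        ≤ ‖x‖ ^ k * (‖g' (x - c • z)‖ * ‖z‖) := by
          rw [norm_smul, norm_pow, norm_norm, ← norm_neg z]
          gcongr
          exact (g' (x - c • z)).le_opNorm (-z)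
      _ = ‖x‖ ^ k * ‖g' (x - c • z)‖ * ‖z‖ := by ring
      _ ≤ 2 ^ (k - 1) * (S k + (A * ‖z‖) ^ k * S 0) * ‖z‖ := by
          grw [norm_pow_mul_norm_schwartz_sub_le g' k x (c • z), hcz]
      _ = _ := by ring
  simpa [← smul_sub, norm_smul] using
    (convex_closedBall (0 : ℝ) A).norm_image_sub_le_of_norm_hasDerivWithin_le
      (fun c _ => ((hasDerivAt_schwartz_sub_smul g x z c).const_smul (‖x‖ ^ k)).hasDerivWithinAt)
      norm_deriv_le hb ha

end Translation

section DilationAverage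

/-- A finite measure all of whose absolute moments are finite. -/
class HasFiniteMoments {E : Type*} [NormedAddCommGroup E] [MeasurableSpace E]
    (μ : Measure E) : Prop extends IsFiniteMeasure μ where
  integrable_norm_pow (k : ℕ) : Integrable (fun z => ‖z‖ ^ k) μ

variable {E F : Type*} [NormedAddCommGroup E] [NormedSpace ℝ E] [NormedAddCommGroup F]
  [NormedSpace ℝ F] [MeasurableSpace E]

/-- The average of `g` over the dilation of `μ` by the factor `a`, recentred at `x`. In terms of
random variables this is `𝔼 g (x - a Z)` with `Z` of law `μ`. -/
def dilationAverage (μ : Measure E) (a : ℝ) (g : E → F) (x : E) : F :=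
  ∫ z, g (x - a • z) ∂μ

lemma dilationAverage_zero [CompleteSpace F] (μ : Measure E) (g : E → F) (x : E) :
    dilationAverage μ 0 g x = μ.real univ • g x := by
  simp [dilationAverage]

variable [BorelSpace E] [SecondCountableTopology E] {μ : Measure E}

lemma integrable_schwartz_sub_smul [IsFiniteMeasure μ] (a : ℝ) (g : 𝓢(E, F)) (x : E) :
    Integrable (fun z => g (x - a • z)) μ :=
  .of_bound (g.continuous.comp (by fun_prop)).aestronglyMeasurable _
    (.of_forall fun _ => SchwartzMap.norm_le_seminorm ℝ g _)

lemma le_dilationAverage [IsProbabilityMeasure μ] {a c : ℝ} {g : 𝓢(E, ℝ)} (hg : ∀ y, c ≤ g y)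
    (x : E) : c ≤ dilationAverage μ a g x := by
  simpa [dilationAverage] using integral_mono (integrable_const c)
    (integrable_schwartz_sub_smul (μ := μ) a g x) fun z => hg (x - a • z)

lemma hasFDerivAt_dilationAverage [IsFiniteMeasure μ] (a : ℝ) (g : 𝓢(E, F)) (x : E) :
    HasFDerivAt (dilationAverage μ a g)
      (dilationAverage μ a (SchwartzMap.fderivCLM ℝ E F g) x) x := by
  let g' := SchwartzMap.fderivCLM ℝ E F g
  refine hasFDerivAt_integral_of_dominated_of_fderiv_le (F' := fun y z => g' (y - a • z))
    (bound := fun _ => SchwartzMap.seminorm ℝ 0 0 g') univ_mem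
    (.of_forall fun y => (integrable_schwartz_sub_smul a g y).aestronglyMeasurable)
    (integrable_schwartz_sub_smul a g x) (integrable_schwartz_sub_smul a g' x).aestronglyMeasurable
    (.of_forall fun z y _ => SchwartzMap.norm_le_seminorm ℝ g' (y - a • z)) (integrable_const _)
    (.of_forall fun z y _ => ?_)
  exact (hasFDerivAt_comp_sub (a • z)).2 (g.hasFDerivAt (y - a • z))

lemma hasDerivAt_dilationAverage_scale [HasFiniteMoments μ] (a : ℝ) (g : 𝓢(E, F)) (x : E) :
    HasDerivAt (fun a => dilationAverage μ a g x) (∫ z, fderiv ℝ g (x - a • z) (-z) ∂μ) a := by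
  let g' := SchwartzMap.fderivCLM ℝ E F g
  have hbound : Integrable (fun z => SchwartzMap.seminorm ℝ 0 0 g' * ‖-z‖) μ := by
    simpa using (HasFiniteMoments.integrable_norm_pow (μ := μ) 1).const_mul _
  have hmeas : AEStronglyMeasurable (fun z => g' (x - a • z) (-z)) μ :=
    ((g'.continuous.comp (by fun_prop)).clm_apply continuous_neg).aestronglyMeasurable
  refine (hasDerivAt_integral_of_dominated_loc_of_deriv_le univ_mem
    (.of_forall fun b => (integrable_schwartz_sub_smul b g x).aestronglyMeasurable)
    (integrable_schwartz_sub_smul a g x) hmeas (.of_forall fun z b _ => ?_) hbound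
    (.of_forall fun z b _ => hasDerivAt_schwartz_sub_smul g x z b)).2
  exact (g' (x - b • z)).le_of_opNorm_le (SchwartzMap.norm_le_seminorm ℝ g' _) (-z)

lemma exists_norm_dilationAverage_sub_le [HasFiniteMoments μ] (A : ℝ) (k : ℕ) (g : 𝓢(E, F)) :
    ∃ C, ∀ a ∈ Metric.closedBall 0 A, ∀ b ∈ Metric.closedBall 0 A, ∀ x,
      ‖x‖ ^ k * ‖dilationAverage μ a g x - dilationAverage μ b g x‖ ≤ C * |a - b| := by
  obtain ⟨C₁, C₂, hC⟩ := exists_norm_schwartz_sub_smul_sub_le g A k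
  refine ⟨∫ z, (C₁ * ‖z‖ + C₂ * ‖z‖ ^ (k + 1)) ∂μ, fun a ha b hb x => ?_⟩
  have hint : Integrable (fun z => C₁ * ‖z‖ + C₂ * ‖z‖ ^ (k + 1)) μ := by
    have h₁ : Integrable (fun z => ‖z‖) μ := by
      simpa using HasFiniteMoments.integrable_norm_pow (μ := μ) 1
    exact (h₁.const_mul C₁).add ((HasFiniteMoments.integrable_norm_pow (k + 1)).const_mul C₂)
  calc ‖x‖ ^ k * ‖dilationAverage μ a g x - dilationAverage μ b g x‖
      = ‖∫ z, ‖x‖ ^ k • (g (x - a • z) - g (x - b • z)) ∂μ‖ := by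
        rw [integral_smul, norm_smul, norm_pow, norm_norm, integral_sub
          (integrable_schwartz_sub_smul a g x) (integrable_schwartz_sub_smul b g x)]
        rfl
    _ ≤ ∫ z, (C₁ * ‖z‖ + C₂ * ‖z‖ ^ (k + 1)) * |a - b| ∂μ := by
        refine norm_integral_le_of_norm_le (hint.mul_const _) (.of_forall fun z => ?_)
        rw [norm_smul, norm_pow, norm_norm]
        exact hC a ha b hb x z
    _ = (∫ z, (C₁ * ‖z‖ + C₂ * ‖z‖ ^ (k + 1)) ∂μ) * |a - b| := integral_mul_const _ _

end DilationAverage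

section SchwartzDilationAverage

universe u

variable {E F : Type u} [NormedAddCommGroup E] [NormedSpace ℝ E] [NormedAddCommGroup F]
  [NormedSpace ℝ F] [MeasurableSpace E] [BorelSpace E] [SecondCountableTopology E]
  {μ : Measure E}

lemma contDiff_dilationAverage [IsFiniteMeasure μ] (n : ℕ) :
    ∀ {F : Type u} [NormedAddCommGroup F] [NormedSpace ℝ F] (a : ℝ) (g : 𝓢(E, F)),
      ContDiff ℝ n (dilationAverage μ a g) := by
  induction n with
  | zero =>
    exact fun a g => contDiff_zero.2 <| continuous_iff_continuousAt.2 fun x =>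
      (hasFDerivAt_dilationAverage a g x).continuousAt
  | succ n ih =>
    exact fun a g => contDiff_succ_iff_hasFDerivAt.2
      ⟨_, ih a (SchwartzMap.fderivCLM ℝ E _ g), hasFDerivAt_dilationAverage a g⟩

lemma exists_iteratedFDeriv_dilationAverage_sub_le [HasFiniteMoments μ] (A : ℝ) (k n : ℕ) :
    ∀ {F : Type u} [NormedAddCommGroup F] [NormedSpace ℝ F] (g : 𝓢(E, F)),
      ∃ C, ∀ a ∈ Metric.closedBall 0 A, ∀ b ∈ Metric.closedBall 0 A, ∀ x,
        ‖x‖ ^ k * ‖iteratedFDeriv ℝ n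
          (fun y => dilationAverage μ a g y - dilationAverage μ b g y) x‖ ≤ C * |a - b| := by
  induction n with
  | zero =>
    intro F _ _ g
    simpa only [norm_iteratedFDeriv_zero] using exists_norm_dilationAverage_sub_le A k g
  | succ n ih =>
    intro F _ _ g
    refine (ih (SchwartzMap.fderivCLM ℝ E F g)).imp fun C hC a ha b hb x => ?_
    have hfderiv : fderiv ℝ (fun y => dilationAverage μ a g y - dilationAverage μ b g y) =
        fun y => dilationAverage μ a (SchwartzMap.fderivCLM ℝ E F g) y -
          dilationAverage μ b (SchwartzMap.fderivCLM ℝ E F g) y :=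
      funext fun y =>
        ((hasFDerivAt_dilationAverage a g y).sub (hasFDerivAt_dilationAverage b g y)).fderiv
    rw [← norm_iteratedFDeriv_fderiv, hfderiv]
    exact hC a ha b hb x

variable [CompleteSpace F]

lemma exists_iteratedFDeriv_dilationAverage_le [HasFiniteMoments μ] (a : ℝ) (g : 𝓢(E, F))
    (k n : ℕ) : ∃ C, ∀ x, ‖x‖ ^ k * ‖iteratedFDeriv ℝ n (dilationAverage μ a g) x‖ ≤ C := by
  obtain ⟨C, hC⟩ := exists_iteratedFDeriv_dilationAverage_sub_le (μ := μ) |a| k n g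
  let g₀ : 𝓢(E, F) := μ.real univ • g
  have hsplit : dilationAverage μ a g =
      (fun y => dilationAverage μ a g y - dilationAverage μ 0 g y) + g₀ := by
    funext y
    simp [dilationAverage_zero, g₀]
  have hsub : ContDiff ℝ n (fun y => dilationAverage μ a g y - dilationAverage μ 0 g y) :=
    (contDiff_dilationAverage n a g).sub (contDiff_dilationAverage n 0 g)
  refine ⟨C * |a - 0| + SchwartzMap.seminorm ℝ k n g₀, fun x => ?_⟩
  rw [hsplit, iteratedFDeriv_add_apply hsub.contDiffAt (g₀.smooth n).contDiffAt]
  grw [norm_add_le, mul_add, hC a (by simp) 0 (by simp) x, SchwartzMap.le_seminorm ℝ k n g₀ x]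

/-- `dilationAverage` of a Schwartz function, as a Schwartz function. -/
def schwartzDilationAverage (μ : Measure E) [HasFiniteMoments μ] (g : 𝓢(E, F)) (a : ℝ) :
    𝓢(E, F) where
  toFun := dilationAverage μ a g
  smooth' := contDiff_infty.2 fun n => contDiff_dilationAverage n a g
  decay' := exists_iteratedFDeriv_dilationAverage_le a g

lemma continuous_schwartzDilationAverage [HasFiniteMoments μ] (g : 𝓢(E, F)) :
    Continuous (schwartzDilationAverage μ g) := by
  refine continuous_iff_continuousAt.2 fun a => continuousAt_schwartzMap_of_le fun k n => ?_
  obtain ⟨C, hC⟩ := exists_iteratedFDeriv_dilationAverage_sub_le (μ := μ) (|a| + 1) k n g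
  refine ⟨fun b => C * |b - a|, ?_, ?_⟩
  · simpa using (by fun_prop : Continuous fun b => C * |b - a|).tendsto a
  · filter_upwards [continuous_abs.continuousAt.eventually_lt_const (lt_add_one |a|)] with b hb x
    exact hC b (by simpa using hb.le) a (by simp) x

end SchwartzDilationAverage

section GaussianMeasure

variable {d : ℕ} {m : Euc d} {t : ℝ}

/-- The density of `gaussE d m t` with respect to Lebesgue measure. -/
def gaussDensity (d : ℕ) (m : Euc d) (t : ℝ) (x : Euc d) : ℝ :=
  (2 * π * t) ^ (-(d : ℝ) / 2) * Real.exp (-‖x - m‖ ^ 2 / (2 * t))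

lemma gaussDensity_nonneg (ht : 0 ≤ t) (x : Euc d) : 0 ≤ gaussDensity d m t x := by
  unfold gaussDensity
  positivity

lemma continuous_gaussDensity : Continuous (gaussDensity d m t) := by
  unfold gaussDensity
  fun_prop

lemma integral_gaussDensity (ht : 0 < t) : ∫ x, gaussDensity d m t x = 1 := by
  have hexp (x : Euc d) : -‖x - m‖ ^ 2 / (2 * t) = -(2 * t)⁻¹ * ‖x - m‖ ^ 2 := by ring
  simp only [gaussDensity, integral_const_mul, hexp]
  rw [integral_sub_right_eq_self (fun x => Real.exp (-(2 * t)⁻¹ * ‖x‖ ^ 2)),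
    GaussianFourier.integral_rexp_neg_mul_sq_norm (by positivity), finrank_euclideanSpace_fin,
    div_inv_eq_mul, show π * (2 * t) = 2 * π * t by ring, ← Real.rpow_add (by positivity),
    neg_div, neg_add_cancel, Real.rpow_zero]

lemma hasFDerivAt_gaussDensity (x : Euc d) :
    HasFDerivAt (gaussDensity d m t) (-(gaussDensity d m t x / t) • innerSL ℝ (x - m)) x := by
  have hsq : HasFDerivAt (fun y => ‖y - m‖ ^ 2) (2 • innerSL ℝ (x - m)) x :=
    (hasFDerivAt_comp_sub m).2 (hasStrictFDerivAt_norm_sq (x - m)).hasFDerivAt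
  have hdensity := ((hsq.const_mul (-(2 * t)⁻¹)).exp).const_mul ((2 * π * t) ^ (-(d : ℝ) / 2))
  refine (hdensity.congr_fderiv ?_).congr_of_eventuallyEq (.of_forall fun y => ?_)
  · ext v
    simp [gaussDensity]
    ring_nf
  · simp only [gaussDensity]
    ring_nf

variable {F : Type*} [NormedAddCommGroup F] [NormedSpace ℝ F]

lemma integral_gaussE (ht : 0 ≤ t) (f : Euc d → F) :
    ∫ x, f x ∂gaussE d m t = ∫ x, gaussDensity d m t x • f x := by
  refine (integral_withDensity_eq_integral_toReal_smul
    continuous_gaussDensity.measurable.ennreal_ofReal (by simp) f).trans ?_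
  simp only [ENNReal.toReal_ofReal (gaussDensity_nonneg ht _)]

lemma integrable_gaussE_iff (ht : 0 ≤ t) {f : Euc d → F} :
    Integrable f (gaussE d m t) ↔ Integrable (fun x => gaussDensity d m t x • f x) := by
  refine (integrable_withDensity_iff_integrable_smul'
    continuous_gaussDensity.measurable.ennreal_ofReal (by simp)).trans ?_
  simp only [ENNReal.toReal_ofReal (gaussDensity_nonneg ht _)]

lemma isProbabilityMeasure_gaussE (ht : 0 < t) : IsProbabilityMeasure (gaussE d m t) := by
  have hint : Integrable (gaussDensity d m t) :=
    not_imp_comm.1 integral_undef (by simp [integral_gaussDensity ht])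
  refine ⟨?_⟩
  rw [gaussE, withDensity_apply _ MeasurableSet.univ, Measure.restrict_univ]
  rw [← ENNReal.ofReal_one, ← integral_gaussDensity (m := m) ht]
  exact (ofReal_integral_eq_lintegral_ofReal hint (.of_forall (gaussDensity_nonneg ht.le))).symm

lemma integral_inner_smul_gaussE (ht : 0 < t) {f : Euc d → F} (v : Euc d)
    (hf : Differentiable ℝ f) (hfi : Integrable f (gaussE d m t))
    (hvf : Integrable (fun x => inner ℝ (x - m) v • f x) (gaussE d m t))
    (hf' : Integrable (fun x => fderiv ℝ f x v) (gaussE d m t)) :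
    ∫ x, inner ℝ (x - m) v • f x ∂gaussE d m t = t • ∫ x, fderiv ℝ f x v ∂gaussE d m t := by
  have hdensity (x : Euc d) : fderiv ℝ (gaussDensity d m t) x v • f x =
      -t⁻¹ • (gaussDensity d m t x • (inner ℝ (x - m) v • f x)) := by
    rw [(hasFDerivAt_gaussDensity x).fderiv]
    simp only [smul_apply, innerSL_apply_apply, smul_smul, smul_eq_mul]
    ring_nf
  rw [integrable_gaussE_iff ht.le] at hfi hvf hf'
  have hparts := integral_smul_fderiv_eq_neg_fderiv_smul_of_integrable (v := v)
    (by simp only [hdensity]; exact hvf.smul (-t⁻¹)) hf' hfi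
    (fun x _ => (hasFDerivAt_gaussDensity x).differentiableAt) (fun x _ => hf x)
  simp only [hdensity] at hparts
  rw [integral_gaussE ht.le, integral_gaussE ht.le, hparts, integral_smul, neg_smul, neg_neg,
    smul_inv_smul₀ ht.ne']

lemma norm_pow_mul_exp_neg_le (k : ℕ) (r : ℝ) (hr : 0 ≤ r) :
    r ^ k * Real.exp (-r ^ 2 / 2) ≤ k.factorial * Real.exp 1 * Real.exp (-(1 / 4) * r ^ 2) := by
  have hpow : r ^ k ≤ Real.exp r * k.factorial :=
    (div_le_iff₀ (by positivity)).1 (Real.pow_div_factorial_le_exp r hr k)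
  calc r ^ k * Real.exp (-r ^ 2 / 2)
      ≤ Real.exp r * k.factorial * Real.exp (-r ^ 2 / 2) := by gcongr
    _ = k.factorial * Real.exp (r + -r ^ 2 / 2) := by rw [Real.exp_add]; ring
    _ ≤ k.factorial * Real.exp (1 + -(1 / 4) * r ^ 2) := by
        refine mul_le_mul_of_nonneg_left (Real.exp_le_exp.2 ?_) (by positivity)
        nlinarith [sq_nonneg (r - 2)]
    _ = _ := by rw [Real.exp_add]; ring

lemma integrable_norm_pow_gaussE (k : ℕ) : Integrable (fun z => ‖z‖ ^ k) (gaussE d 0 1) := by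
  have hexp : Integrable fun z : Euc d => Real.exp (-(1 / 4) * ‖z‖ ^ 2) :=
    not_imp_comm.1 integral_undef <| by
      rw [GaussianFourier.integral_rexp_neg_mul_sq_norm (by norm_num)]
      positivity
  rw [integrable_gaussE_iff zero_le_one]
  refine (hexp.const_mul ((2 * π) ^ (-(d : ℝ) / 2) * (k.factorial * Real.exp 1))).mono'
    (continuous_gaussDensity.smul (by fun_prop)).aestronglyMeasurable (.of_forall fun z => ?_)
  calc ‖gaussDensity d 0 1 z • ‖z‖ ^ k‖
      = (2 * π) ^ (-(d : ℝ) / 2) * (‖z‖ ^ k * Real.exp (-‖z‖ ^ 2 / 2)) := by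
        rw [norm_smul, Real.norm_of_nonneg (gaussDensity_nonneg zero_le_one z), norm_pow, norm_norm]
        simp only [gaussDensity, sub_zero, mul_one]
        ring
    _ ≤ _ := by
        rw [mul_assoc]
        grw [norm_pow_mul_exp_neg_le k _ (norm_nonneg z)]

instance : HasFiniteMoments (gaussE d 0 1) where
  toIsFiniteMeasure :=
    have := isProbabilityMeasure_gaussE (m := (0 : Euc d)) one_pos
    inferInstance
  integrable_norm_pow := integrable_norm_pow_gaussE

end GaussianMeasure

section HeatFlow

universe u

variable {E F : Type u} [NormedAddCommGroup E] [InnerProductSpace ℝ E] [FiniteDimensional ℝ E]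
  [NormedAddCommGroup F] [NormedSpace ℝ F] [MeasurableSpace E] [BorelSpace E]
  {μ : Measure E}

lemma lineDeriv_schwartzDilationAverage [CompleteSpace F] [HasFiniteMoments μ] (v : E)
    (g : 𝓢(E, F)) (a : ℝ) :
    ∂_{v} (schwartzDilationAverage μ g a) = schwartzDilationAverage μ (∂_{v} g) a := by
  ext x
  refine (DFunLike.congr_fun (hasFDerivAt_dilationAverage a g x).fderiv v).trans ?_
  exact ContinuousLinearMap.integral_apply (integrable_schwartz_sub_smul a _ x) v

lemma dilationAverage_laplacian {ι : Type*} [Fintype ι] [IsFiniteMeasure μ]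
    (b : OrthonormalBasis ι ℝ E) (a : ℝ) (g : 𝓢(E, F)) (x : E) :
    dilationAverage μ a (Δ g : 𝓢(E, F)) x =
      ∑ i, dilationAverage μ a (∂_{b i} (∂_{b i} g) : 𝓢(E, F)) x := by
  simp only [dilationAverage, SchwartzMap.laplacian_eq_sum b, sum_apply]
  exact integral_finsetSum _ fun i _ => integrable_schwartz_sub_smul a _ x

lemma laplacian_schwartzDilationAverage [CompleteSpace F] [HasFiniteMoments μ] (g : 𝓢(E, F))
    (a : ℝ) :
    Δ (schwartzDilationAverage μ g a) = schwartzDilationAverage μ (Δ g) a := by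
  ext x
  let b := stdOrthonormalBasis ℝ E
  simp only [SchwartzMap.laplacian_eq_sum b, lineDeriv_schwartzDilationAverage, sum_apply]
  rw [← SchwartzMap.laplacian_eq_sum b]
  exact (dilationAverage_laplacian b a g x).symm

variable {d : ℕ} {F : Type} [NormedAddCommGroup F] [NormedSpace ℝ F]

lemma integrable_inner_smul_schwartz_sub_smul (v : Euc d) (a : ℝ) (g : 𝓢(Euc d, F)) (x : Euc d) :
    Integrable (fun z => inner ℝ z v • g (x - a • z)) (gaussE d 0 1) := by
  have hinner : Integrable (fun z => inner ℝ z v) (gaussE d 0 1) := by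
    refine ((HasFiniteMoments.integrable_norm_pow 1).mul_const ‖v‖).mono'
      (by fun_prop) (.of_forall fun z => ?_)
    rw [pow_one]
    exact norm_inner_le_norm z v
  exact hinner.smul_bdd _ (g.continuous.comp (by fun_prop)).aestronglyMeasurable
    (.of_forall fun z => SchwartzMap.norm_le_seminorm ℝ g (x - a • z))

lemma integral_inner_smul_schwartz_sub_smul (v : Euc d) (a : ℝ) (g : 𝓢(Euc d, F)) (x : Euc d) :
    ∫ z, inner ℝ z v • g (x - a • z) ∂gaussE d 0 1 =
      -a • dilationAverage (gaussE d 0 1) a (∂_{v} g : 𝓢(Euc d, F)) x := by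
  have hfderiv (z : Euc d) : HasFDerivAt (fun z => g (x - a • z))
      ((fderiv ℝ g (x - a • z)).comp (-(a • ContinuousLinearMap.id ℝ (Euc d)))) z :=
    (g.hasFDerivAt (x - a • z)).comp z (((hasFDerivAt_id z).const_smul a).const_sub x)
  have hderiv (z : Euc d) : fderiv ℝ (fun z => g (x - a • z)) z v =
      -a • (∂_{v} g) (x - a • z) := by
    rw [(hfderiv z).fderiv, SchwartzMap.lineDerivOp_apply_eq_fderiv]
    simp
  have hstein := integral_inner_smul_gaussE (m := (0 : Euc d)) one_pos v
    (fun z => (hfderiv z).differentiableAt) (integrable_schwartz_sub_smul a g x)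
    (by simpa using integrable_inner_smul_schwartz_sub_smul v a g x)
    (by simp only [hderiv]; exact (integrable_schwartz_sub_smul a _ x).smul (-a))
  simpa only [sub_zero, one_smul, hderiv, integral_smul, dilationAverage] using hstein

lemma hasDerivAt_dilationAverage_gaussE (a : ℝ) (g : 𝓢(Euc d, F)) (x : Euc d) :
    HasDerivAt (fun a => dilationAverage (gaussE d 0 1) a g x)
      (a • dilationAverage (gaussE d 0 1) a (Δ g : 𝓢(Euc d, F)) x) a := by
  let b := EuclideanSpace.basisFun (Fin d) ℝ
  have hexpand (z : Euc d) : fderiv ℝ g (x - a • z) (-z) =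
      ∑ i, -(inner ℝ z (b i) • (∂_{b i} g) (x - a • z)) := by
    rw [map_neg, ← congrArg (fderiv ℝ g (x - a • z)) (b.sum_repr' z), map_sum]
    simp [real_inner_comm, SchwartzMap.lineDerivOp_apply_eq_fderiv]
  refine (hasDerivAt_dilationAverage_scale a g x).congr_deriv ?_
  simp only [hexpand, Finset.sum_neg_distrib, integral_neg]
  rw [integral_finsetSum _ fun i _ => integrable_inner_smul_schwartz_sub_smul (b i) a _ x,
    dilationAverage_laplacian b]
  simp only [integral_inner_smul_schwartz_sub_smul, neg_smul, Finset.sum_neg_distrib, neg_neg,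
    Finset.smul_sum]

lemma heatP_eq_dilationAverage {α t : ℝ} (hα : 0 < α) (ht : 0 ≤ t) (f : Euc d → ℝ) (x : Euc d) :
    heatP d α t f x = dilationAverage (gaussE d 0 1) √(α * t) f x := by
  have := isProbabilityMeasure_gaussE (m := (0 : Euc d)) one_pos
  rcases ht.eq_or_lt with rfl | ht
  · simp [heatP, dilationAverage_zero]
  set a := √(α * t)
  have ha : 0 < a := Real.sqrt_pos.2 (by positivity)
  have ha2 : a ^ 2 = α * t := Real.sq_sqrt (by positivity)
  have hconst : (2 * π) ^ (-(d : ℝ) / 2) = a ^ d * (2 * π * α * t) ^ (-(d : ℝ) / 2) := by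
    rw [show 2 * π * α * t = 2 * π * a ^ 2 by rw [ha2]; ring,
      Real.mul_rpow (x := 2 * π) (by positivity) (by positivity), ← Real.rpow_natCast_mul ha.le,
      mul_left_comm, ← Real.rpow_natCast a d, ← Real.rpow_add ha]
    simp [mul_div_cancel₀]
  let K (y : Euc d) : ℝ := (2 * π * α * t) ^ (-(d : ℝ) / 2) *
    Real.exp (-‖x - y‖ ^ 2 / (2 * α * t)) * f y
  have hK (z : Euc d) : gaussDensity d 0 1 z • f (x - a • z) = a ^ d * K (x - a • z) := by
    have hnorm : ‖x - (x - a • z)‖ ^ 2 = α * t * ‖z‖ ^ 2 := by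
      rw [sub_sub_cancel, norm_smul, mul_pow, Real.norm_eq_abs, sq_abs, ha2]
    have hexp : -(α * t * ‖z‖ ^ 2) / (2 * α * t) = -‖z‖ ^ 2 / 2 := by field_simp
    simp only [gaussDensity, K, hnorm, hexp, hconst, mul_one, sub_zero, smul_eq_mul]
    ring
  calc heatP d α t f x
      = ∫ y, K y := if_neg ht.ne'
    _ = ∫ y, K (x - y) := (integral_sub_left_eq_self K volume x).symm
    _ = a ^ d * ∫ z, K (x - a • z) := by
        rw [Measure.integral_comp_smul volume (fun y => K (x - y)) a, finrank_euclideanSpace_fin,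
          abs_of_pos (by positivity), smul_eq_mul, mul_inv_cancel_left₀ (by positivity)]
    _ = dilationAverage (gaussE d 0 1) a f x := by
        simp only [dilationAverage, integral_gaussE zero_le_one, hK, integral_const_mul]

variable [CompleteSpace F]

/-- The heat semigroup `P_t` acting on Schwartz functions. -/
def heatFlow (α : ℝ) (g : 𝓢(Euc d, F)) (t : ℝ) : 𝓢(Euc d, F) :=
  schwartzDilationAverage (gaussE d 0 1) g √(α * t)

lemma heatFlow_apply (α : ℝ) (g : 𝓢(Euc d, F)) (t : ℝ) (x : Euc d) :
    heatFlow α g t x = dilationAverage (gaussE d 0 1) √(α * t) g x := rfl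

lemma continuous_heatFlow (α : ℝ) (g : 𝓢(Euc d, F)) : Continuous (heatFlow α g) :=
  (continuous_schwartzDilationAverage g).comp (by fun_prop)

lemma continuous_heatFlow_apply (α : ℝ) (g : 𝓢(Euc d, F)) (x : Euc d) :
    Continuous (fun t => heatFlow α g t x) :=
  (continuous_eval_const (F := BoundedContinuousFunction (Euc d) F) x).comp
    ((SchwartzMap.toBoundedContinuousFunctionCLM ℝ (Euc d) F).continuous.comp
      (continuous_heatFlow α g))

lemma heatP_one_add {α t : ℝ} (hα : 0 < α) (ht : 0 ≤ t) (g : 𝓢(Euc d, ℝ)) (x : Euc d) :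
    heatP d α t (fun y => 1 + g y) x = 1 + heatFlow α g t x := by
  have := isProbabilityMeasure_gaussE (m := (0 : Euc d)) one_pos
  rw [heatP_eq_dilationAverage hα ht, heatFlow_apply, dilationAverage,
    integral_add (integrable_const 1) (integrable_schwartz_sub_smul _ g x)]
  simp [dilationAverage]

lemma laplacian_heatFlow (α : ℝ) (g : 𝓢(Euc d, F)) (t : ℝ) :
    Δ (heatFlow α g t) = heatFlow α (Δ g) t :=
  laplacian_schwartzDilationAverage g _

lemma hasDerivAt_heatFlow {α t : ℝ} (hαt : 0 < α * t) (g : 𝓢(Euc d, F))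
    (x : Euc d) : HasDerivAt (fun t => heatFlow α g t x) ((α / 2) • Δ (heatFlow α g t) x) t := by
  have hsqrt : HasDerivAt (fun t => √(α * t)) (α / (2 * √(α * t))) t := by
    simpa using ((hasDerivAt_id t).const_mul α).sqrt hαt.ne'
  refine ((hasDerivAt_dilationAverage_gaussE √(α * t) g x).scomp t hsqrt).congr_deriv ?_
  have := Real.sqrt_pos.2 hαt
  rw [laplacian_heatFlow, heatFlow_apply, smul_smul]
  field_simp

lemma hasDerivWithinAt_heatFlow {α t : ℝ} (hα : 0 < α) (ht : 0 ≤ t) (g : 𝓢(Euc d, F))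
    (x : Euc d) :
    HasDerivWithinAt (fun t => heatFlow α g t x) ((α / 2) • Δ (heatFlow α g t) x) (Ici 0) t := by
  have hderiv {t : ℝ} (ht : 0 < t) := hasDerivAt_heatFlow (mul_pos hα ht) g x
  rcases ht.eq_or_lt with rfl | ht
  · have hcont : Continuous fun t => (α / 2) • Δ (heatFlow α g t) x := by
      simp only [laplacian_heatFlow]
      exact (continuous_heatFlow_apply α _ x).const_smul _
    refine hasDerivWithinAt_Ici_of_tendsto_deriv (s := Ioi 0)
      (fun t ht => (hderiv ht).differentiableAt.differentiableWithinAt)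
      (continuous_heatFlow_apply α g x).continuousWithinAt self_mem_nhdsWithin ?_
    refine ((hcont.tendsto 0).mono_left nhdsWithin_le_nhds).congr' ?_
    filter_upwards [self_mem_nhdsWithin] with t ht using (hderiv ht).deriv.symm
  · exact (hderiv ht).hasDerivWithinAt

end HeatFlow

section ColeHopf

variable {E : Type} [NormedAddCommGroup E] [InnerProductSpace ℝ E] [FiniteDimensional ℝ E]

lemma contDiff_norm_sq_toDual_symm :
    ContDiff ℝ ∞ fun L : E →L[ℝ] ℝ => ‖(InnerProductSpace.toDual ℝ E).symm L‖ ^ 2 :=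
  (contDiff_norm_sq ℝ).comp (InnerProductSpace.toDual ℝ E).symm.contDiff

/-- The squared length `|∇f|²` of the gradient of a Schwartz function, as a Schwartz function. -/
def gradientNormSq (f : 𝓢(E, ℝ)) : 𝓢(E, ℝ) :=
  smoothComp contDiff_norm_sq_toDual_symm (SchwartzMap.fderivCLM ℝ E ℝ f)

lemma gradientNormSq_apply (f : 𝓢(E, ℝ)) (x : E) :
    gradientNormSq f x = ‖gradient f x‖ ^ 2 := by
  simp [gradientNormSq, smoothComp_apply, gradient]

lemma continuous_gradientNormSq : Continuous (gradientNormSq (E := E)) :=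
  (continuous_smoothComp _).comp (SchwartzMap.fderivCLM ℝ E ℝ).continuous

lemma gradientNormSq_apply_eq_sum {ι : Type*} [Fintype ι] (b : OrthonormalBasis ι ℝ E)
    (f : 𝓢(E, ℝ)) (x : E) : gradientNormSq f x = ∑ i, (∂_{b i} f) x ^ 2 := by
  rw [gradientNormSq_apply, ← b.sum_sq_inner_left]
  simp [inner_gradient_left, SchwartzMap.lineDerivOp_apply_eq_fderiv]

/-- The Schwartz function `exp (c f) - 1`. -/
def schwartzExpSubOne (c : ℝ) (f : 𝓢(E, ℝ)) : 𝓢(E, ℝ) :=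
  smoothComp (G := fun y => Real.exp (c * y)) (by fun_prop) f

lemma schwartzExpSubOne_apply (c : ℝ) (f : 𝓢(E, ℝ)) (x : E) :
    schwartzExpSubOne c f x = Real.exp (c * f x) - 1 := by
  simp [schwartzExpSubOne, smoothComp_apply]

lemma lineDeriv_schwartzExpSubOne (c : ℝ) (f : 𝓢(E, ℝ)) (v x : E) :
    (∂_{v} (schwartzExpSubOne c f)) x = Real.exp (c * f x) * (c * (∂_{v} f) x) := by
  have hf : ⇑(schwartzExpSubOne c f) = fun y => Real.exp (c * f y) - 1 :=
    funext (schwartzExpSubOne_apply c f)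
  rw [SchwartzMap.lineDerivOp_apply_eq_fderiv, hf,
    (((f.hasFDerivAt x).const_mul c).exp.sub_const 1).fderiv]
  rfl

lemma lineDeriv_lineDeriv_schwartzExpSubOne (c : ℝ) (f : 𝓢(E, ℝ)) (v x : E) :
    (∂_{v} (∂_{v} (schwartzExpSubOne c f))) x =
      Real.exp (c * f x) * (c * (∂_{v} (∂_{v} f)) x + c ^ 2 * (∂_{v} f) x ^ 2) := by
  have hf : ⇑(∂_{v} (schwartzExpSubOne c f) : 𝓢(E, ℝ)) =
      fun y => Real.exp (c * f y) * (c * (∂_{v} f) y) :=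
    funext (lineDeriv_schwartzExpSubOne c f v)
  have hprod : HasFDerivAt (fun y => Real.exp (c * f y) * (c * (∂_{v} f) y)) _ x :=
    ((f.hasFDerivAt x).const_mul c).exp.mul (((∂_{v} f : 𝓢(E, ℝ)).hasFDerivAt x).const_mul c)
  rw [SchwartzMap.lineDerivOp_apply_eq_fderiv, hf, hprod.fderiv]
  simp only [add_apply, smul_apply, smul_eq_mul, ← SchwartzMap.lineDerivOp_apply_eq_fderiv]
  ring

lemma laplacian_schwartzExpSubOne (c : ℝ) (f : 𝓢(E, ℝ)) (x : E) :
    (Δ (schwartzExpSubOne c f)) x =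
      Real.exp (c * f x) * (c * (Δ f) x + c ^ 2 * gradientNormSq f x) := by
  let b := stdOrthonormalBasis ℝ E
  simp only [SchwartzMap.laplacian_eq_sum b, sum_apply, gradientNormSq_apply_eq_sum b,
    lineDeriv_lineDeriv_schwartzExpSubOne, Finset.mul_sum, ← Finset.sum_add_distrib]

/-- For `c > 0`, a smooth function on the whole line that agrees with the logarithm on `[c, ∞)`:
the cutoff vanishes below `c / 2`. -/
def truncLog (c y : ℝ) : ℝ := smoothTransition (2 * y / c - 1) * Real.log y

lemma truncLog_of_le {c y : ℝ} (hc : 0 < c) (hy : c ≤ y) : truncLog c y = Real.log y := by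
  have : 1 ≤ y / c := (one_le_div hc).2 hy
  rw [truncLog, smoothTransition.one_of_one_le (by rw [mul_div_assoc]; linarith), one_mul]

lemma contDiff_truncLog {c : ℝ} (hc : 0 < c) : ContDiff ℝ ∞ (truncLog c) := by
  refine contDiff_iff_contDiffAt.2 fun y => ?_
  rcases eq_or_ne y 0 with rfl | hy
  · have hzero : ∀ᶠ y in 𝓝 0, truncLog c y = 0 := by
      filter_upwards [eventually_lt_nhds (half_pos hc)] with y hy
      rw [truncLog, smoothTransition.zero_of_nonpos, zero_mul]
      rw [sub_nonpos, div_le_one hc]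
      linarith
    exact contDiffAt_const.congr_of_eventuallyEq hzero
  · exact (smoothTransition.contDiffAt.comp y (by fun_prop)).mul (contDiffAt_log.2 hy)

variable {d : ℕ}

/-- The Cole–Hopf flow `t ↦ V_t φ` in Schwartz space. The truncation level of the logarithm is a
lower bound for `exp (-φ / α)`, hence for `P_t exp (-φ / α)`. -/
def coleHopfFlow (α : ℝ) (φ : 𝓢(Euc d, ℝ)) (t : ℝ) : 𝓢(Euc d, ℝ) :=
  smoothComp (G := fun y => -α * truncLog (Real.exp (-α⁻¹ * SchwartzMap.seminorm ℝ 0 0 φ)) (1 + y))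
    (contDiff_const.mul ((contDiff_truncLog (Real.exp_pos _)).comp (by fun_prop)))
    (heatFlow α (schwartzExpSubOne (-α⁻¹) φ) t)

lemma continuous_coleHopfFlow (α : ℝ) (φ : 𝓢(Euc d, ℝ)) : Continuous (coleHopfFlow α φ) :=
  (continuous_smoothComp _).comp (continuous_heatFlow α _)

lemma lap_eq_laplacian (f : 𝓢(Euc d, ℝ)) (x : Euc d) : lap d f x = (Δ f) x := by
  rw [SchwartzMap.laplacian_eq_sum (EuclideanSpace.basisFun (Fin d) ℝ), sum_apply]
  simp only [EuclideanSpace.basisFun_apply]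
  rfl

variable {α : ℝ} (hα : 0 < α)

include hα

lemma exp_le_one_add_heatFlow (φ : 𝓢(Euc d, ℝ)) (t : ℝ) (x : Euc d) :
    Real.exp (-α⁻¹ * SchwartzMap.seminorm ℝ 0 0 φ) ≤
      1 + heatFlow α (schwartzExpSubOne (-α⁻¹) φ) t x := by
  have := isProbabilityMeasure_gaussE (m := (0 : Euc d)) one_pos
  refine sub_le_iff_le_add'.1 (le_dilationAverage (fun y => ?_) x)
  rw [schwartzExpSubOne_apply, sub_le_sub_iff_right, Real.exp_le_exp, neg_mul, neg_mul,
    neg_le_neg_iff]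
  gcongr
  exact (le_abs_self _).trans (SchwartzMap.norm_le_seminorm ℝ φ y)

lemma coleHopfFlow_apply (φ : 𝓢(Euc d, ℝ)) (t : ℝ) (x : Euc d) :
    coleHopfFlow α φ t x =
      -α * Real.log (1 + heatFlow α (schwartzExpSubOne (-α⁻¹) φ) t x) := by
  rw [coleHopfFlow, smoothComp_apply,
    truncLog_of_le (Real.exp_pos _) (exp_le_one_add_heatFlow hα φ t x)]
  simp [truncLog]

lemma coleHopf_eq_coleHopfFlow {t : ℝ} (ht : 0 ≤ t) (φ : 𝓢(Euc d, ℝ)) :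
    coleHopf d α t φ = coleHopfFlow α φ t := by
  have hexp : (fun y => Real.exp (-φ y / α)) = fun y => 1 + schwartzExpSubOne (-α⁻¹) φ y := by
    funext y
    rw [schwartzExpSubOne_apply]
    ring_nf
  funext x
  rw [coleHopf, hexp, heatP_one_add hα ht, coleHopfFlow_apply hα]

lemma schwartzExpSubOne_coleHopfFlow (φ : 𝓢(Euc d, ℝ)) (t : ℝ) :
    schwartzExpSubOne (-α⁻¹) (coleHopfFlow α φ t) =
      heatFlow α (schwartzExpSubOne (-α⁻¹) φ) t := by
  ext x
  have hpos := (Real.exp_pos _).trans_le (exp_le_one_add_heatFlow hα φ t x)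
  rw [schwartzExpSubOne_apply, coleHopfFlow_apply hα, neg_mul, neg_mul, mul_neg,
    neg_neg, inv_mul_cancel_left₀ hα.ne', Real.exp_log hpos, add_sub_cancel_left]

lemma hasDerivWithinAt_coleHopfFlow {t : ℝ} (ht : 0 ≤ t) (φ : 𝓢(Euc d, ℝ)) (x : Euc d) :
    HasDerivWithinAt (fun s => coleHopfFlow α φ s x)
      (((α / 2) • Δ (coleHopfFlow α φ t) - (1 / 2 : ℝ) • gradientNormSq (coleHopfFlow α φ t)) x)
      (Ici 0) t := by
  let u := heatFlow α (schwartzExpSubOne (-α⁻¹) φ)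
  let V := coleHopfFlow α φ
  have hexp : 1 + u t x = Real.exp (-α⁻¹ * V t x) := by
    rw [eq_comm, ← sub_eq_iff_eq_add', ← schwartzExpSubOne_apply, schwartzExpSubOne_coleHopfFlow hα]
  have hΔ : (Δ (u t)) x = (1 + u t x) *
      (-α⁻¹ * (Δ (V t)) x + (-α⁻¹) ^ 2 * gradientNormSq (V t) x) := by
    rw [hexp, ← laplacian_schwartzExpSubOne, schwartzExpSubOne_coleHopfFlow hα]
  have hpos : 0 < 1 + u t x := hexp ▸ Real.exp_pos _
  simp only [coleHopfFlow_apply hα]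
  refine ((((hasDerivWithinAt_heatFlow hα ht _ x).const_add 1).log hpos.ne').const_mul
    (-α)).congr_deriv ?_
  change -α * ((α / 2 * (Δ (u t)) x) / (1 + u t x)) =
    α / 2 * (Δ (V t)) x - 1 / 2 * gradientNormSq (V t) x
  rw [hΔ]
  field_simp
  ring

end ColeHopf

/-- for Schwartz `φ`, `V_t φ` is Schwartz for every `t ≥ 0`, and the maps
`t ↦ V_t φ`, `t ↦ ∂_t V_t φ`, `t ↦ Δ V_t φ` and `t ↦ |∇ V_t φ|²` are continuous from `[0,∞)`
into the Schwartz space. -/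
theorem statement7 (d : ℕ) (hd : 1 ≤ d) (α : ℝ) (hα : 0 < α)
    (φ : SchwartzMap (Euc d) ℝ) :
    ∃ Vf Vt VΔ VΓ : ℝ → SchwartzMap (Euc d) ℝ,
      (∀ t ≥ (0 : ℝ), ∀ x, Vf t x = coleHopf d α t (fun y => φ y) x) ∧
      (∀ t ≥ (0 : ℝ), ∀ x,
        HasDerivWithinAt (fun s => coleHopf d α s (fun y => φ y) x) (Vt t x) (Set.Ici 0) t) ∧
      (∀ t ≥ (0 : ℝ), ∀ x, VΔ t x = lap d (coleHopf d α t (fun y => φ y)) x) ∧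
      (∀ t ≥ (0 : ℝ), ∀ x, VΓ t x = ‖gradient (coleHopf d α t (fun y => φ y)) x‖ ^ 2) ∧
      ContinuousOn Vf (Set.Ici 0) ∧ ContinuousOn Vt (Set.Ici 0) ∧
      ContinuousOn VΔ (Set.Ici 0) ∧ ContinuousOn VΓ (Set.Ici 0) := by
  have hV {t : ℝ} (ht : 0 ≤ t) : coleHopf d α t (fun y => φ y) = coleHopfFlow α φ t :=
    coleHopf_eq_coleHopfFlow hα ht φ
  have hcont : Continuous (coleHopfFlow α φ) := continuous_coleHopfFlow α φ
  have hcontΔ : Continuous fun t => (Δ (coleHopfFlow α φ t) : 𝓢(Euc d, ℝ)) :=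
    (LineDeriv.laplacianCLM ℝ (Euc d) 𝓢(Euc d, ℝ)).continuous.comp hcont
  have hcontΓ : Continuous fun t => gradientNormSq (coleHopfFlow α φ t) :=
    continuous_gradientNormSq.comp hcont
  refine ⟨coleHopfFlow α φ,
    fun t => (α / 2) • Δ (coleHopfFlow α φ t) - (1 / 2 : ℝ) • gradientNormSq (coleHopfFlow α φ t),
    fun t => Δ (coleHopfFlow α φ t), fun t => gradientNormSq (coleHopfFlow α φ t),
    fun t ht x => ?_, fun t ht x => ?_, fun t ht x => ?_, fun t ht x => ?_, hcont.continuousOn,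
    ?_, hcontΔ.continuousOn, hcontΓ.continuousOn⟩
  · rw [hV ht]
  · refine (hasDerivWithinAt_coleHopfFlow hα ht φ x).congr (fun s hs => ?_) ?_
    · rw [hV hs]
    · rw [hV ht]
  · rw [hV ht, lap_eq_laplacian]
  · rw [hV ht, gradientNormSq_apply]
  · exact ((hcontΔ.const_smul (α / 2)).sub (hcontΓ.const_smul (1 / 2 : ℝ))).continuousOn
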